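/- Let G be an ordered-like additive semigroup, i.e., a commutative additive semigroup with zero in which 0 is the only invertible element and for any two finite nonempty subsets S₁, S₂ of G with S₁ + S₂ ≠ {0} there exists c ∈ S₁ + S₂ having exactly one representation c = a + b with a ∈ S₁ and b ∈ S₂. Let A = ⊕_{σ∈G} A_σ be a G-graded ring that is a domain with invariant basis number, and suppose A is faithfully flat as a left A₀-module. If K is a right ideal of A₀ that is stably free but not free as a right A₀-module, then the induced right ideal KA of A (equivalently K ⊗_{A₀} A) is stably free but not free as a right A-module. -/

import Mathlib

/-!
Write `KA` for the induced right ideal. Stable freeness ascends by flatness: an isomorphism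
`A₀ᵐ ≃ K × A₀ⁿ` is given by `m` vectors, and the equational criterion, applied to a finite system
of relations, shows that these vectors stay independent over `A`, so they give
`Aᵐ ≃ KA × Aⁿ` (`isStablyFree_inducedIdeal`).

Freeness descends because `0` is the only invertible degree: the components of nonzero degree form
a two-sided ideal, so the degree-zero component is a ring retraction `π : A → A₀`
(`exists_retraction`). Since `π` is the identity on `K`, applying `π` to the coordinates with
respect to a basis of `KA` gives coordinates on `K` (`free_of_free_inducedIdeal`); conceptually,
`KA ⊗_A A₀ ≅ K`.
-/

open Pointwise

/-- An additive commutative semigroup with zero is *ordered-like* if `0` is its only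
invertible element and for any two finite nonempty subsets `S₁`, `S₂` with
`S₁ + S₂ ≠ {0}` there is `c ∈ S₁ + S₂` with exactly one representation `c = a + b`,
`a ∈ S₁`, `b ∈ S₂`. -/
def OrderedLike (G : Type*) [AddCommMonoid G] [DecidableEq G] : Prop :=
  (∀ a b : G, a + b = 0 → a = 0) ∧
    ∀ S₁ S₂ : Finset G, S₁.Nonempty → S₂.Nonempty → S₁ + S₂ ≠ ({0} : Finset G) →
      ∃ c ∈ S₁ + S₂, ∃! p : G × G, p.1 ∈ S₁ ∧ p.2 ∈ S₂ ∧ p.1 + p.2 = c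

/-- A finitely generated module `M` over `R` is *stably free* if
`M ⊕ Rⁿ ≅ Rᵐ` for some nonnegative integers `n`, `m`. -/
def IsStablyFree (R : Type*) [Ring R] (M : Type*) [AddCommGroup M] [Module R M] : Prop :=
  ∃ n m : ℕ, Nonempty ((M × (Fin n → R)) ≃ₗ[R] (Fin m → R))

/-- Flatness of a left `R`-module over a (possibly noncommutative) ring,
expressed by the standard equational criterion: every linear relation
`∑ rᵢ • xᵢ = 0` is a consequence of linear relations in `R` itself. -/
def IsFlatLeft (R M : Type*) [Ring R] [AddCommGroup M] [Module R M] : Prop :=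
  ∀ (n : ℕ) (r : Fin n → R) (x : Fin n → M), ∑ i, r i • x i = 0 →
    ∃ (m : ℕ) (a : Fin n → Fin m → R) (y : Fin m → M),
      (∀ i, x i = ∑ j, a i j • y j) ∧ ∀ j, ∑ i, r i * a i j = 0

/-- Faithful flatness of a left `R`-module over a (possibly noncommutative) ring:
`M` is flat and `I·M ≠ M` for every proper right ideal `I` of `R`
(equivalently, `- ⊗_R M` is exact and kills no nonzero right module). -/
def IsFaithfullyFlatLeft (R M : Type*) [Ring R] [AddCommGroup M] [Module R M] : Prop :=
  IsFlatLeft R M ∧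
    ∀ I : Submodule Rᵐᵒᵖ R, I ≠ ⊤ →
      AddSubgroup.closure {x : M | ∃ r ∈ I, ∃ m : M, r • m = x} ≠ ⊤

/-- Flatness propagates from single relations to finite systems of relations: a solution in `M`
of a finite homogeneous linear system over `R` is a combination of solutions in `R`. -/
theorem IsFlatLeft.system {R M : Type*} [Ring R] [AddCommGroup M] [Module R M]
    (h : IsFlatLeft R M) {ι : Type*} (s : Finset ι) (n : ℕ) (r : ι → Fin n → R) (x : Fin n → M)
    (hx : ∀ l ∈ s, ∑ i, r l i • x i = 0) :
    ∃ (m : ℕ) (a : Fin n → Fin m → R) (y : Fin m → M),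
      (∀ i, x i = ∑ j, a i j • y j) ∧ ∀ l ∈ s, ∀ j, ∑ i, r l i * a i j = 0 := by
  classical
  induction s using Finset.induction_on with
  | empty =>
    refine ⟨n, fun i j => if i = j then 1 else 0, x, fun i => ?_, by simp⟩
    simp
  | insert l s hl ih =>
    obtain ⟨m, a, y, hxy, ha⟩ := ih fun l' hl' => hx l' (Finset.mem_insert_of_mem hl')
    -- Rewritten in terms of `y`, the new relation `l` is a single relation, and is resolved
    -- by `a'`; the product matrix `a * a'` then resolves all relations at once.
    have hrel : ∑ j, (∑ i, r l i * a i j) • y j = 0 := by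
      rw [← hx l (Finset.mem_insert_self l s)]
      simp only [hxy, Finset.sum_smul, Finset.smul_sum, mul_smul]
      exact Finset.sum_comm
    obtain ⟨m', a', y', hy, ha'⟩ := h m _ y hrel
    have hassoc : ∀ l' k, ∑ i, r l' i * ∑ j, a i j * a' j k
        = ∑ j, (∑ i, r l' i * a i j) * a' j k := by
      intro l' k
      simp only [Finset.mul_sum, Finset.sum_mul, mul_assoc]
      exact Finset.sum_comm
    refine ⟨m', fun i k => ∑ j, a i j * a' j k, y', fun i => ?_, fun l' hl' k => ?_⟩
    · rw [hxy i]
      simp only [hy, Finset.sum_smul, Finset.smul_sum, mul_smul]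
      exact Finset.sum_comm
    · rw [hassoc]
      rcases Finset.mem_insert.1 hl' with rfl | hl'
      · exact ha' k
      · simp [ha l' hl']

/-- The right ideal of `A` generated by a right ideal `K` of the subring `A₀`. -/
abbrev inducedIdeal {A : Type*} [Ring A] {A₀ : Subring A} (K : Submodule A₀ᵐᵒᵖ A₀) :
    Submodule Aᵐᵒᵖ A :=
  Submodule.span Aᵐᵒᵖ (Subtype.val '' (K : Set A₀))

theorem coe_mem_inducedIdeal {A : Type*} [Ring A] {A₀ : Subring A} {K : Submodule A₀ᵐᵒᵖ A₀}
    {k : A₀} (hk : k ∈ K) : (k : A) ∈ inducedIdeal K :=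
  Submodule.subset_span ⟨k, hk, rfl⟩

open MulOpposite in
/-- The images in `KA × Aⁿ` of the standard basis vectors under an isomorphism
`A₀ᵐ ≃ K × A₀ⁿ` again form a basis: they generate because they do so over `A₀`, and a relation
between them over `A` comes, by flatness, from relations over `A₀`, which are trivial. -/
theorem isStablyFree_inducedIdeal {A : Type*} [Ring A] {A₀ : Subring A} (hf : IsFlatLeft A₀ A)
    {K : Submodule A₀ᵐᵒᵖ A₀} (hsf : IsStablyFree A₀ᵐᵒᵖ K) :
    IsStablyFree Aᵐᵒᵖ (inducedIdeal K) := by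
  classical
  obtain ⟨n, m, ⟨φ⟩⟩ := hsf
  let u : Fin m → K × (Fin n → A₀ᵐᵒᵖ) := fun i => φ.symm (Pi.single i 1)
  have hu : ∀ c : Fin m → A₀ᵐᵒᵖ, φ.symm c = ∑ i, c i • u i := by
    intro c
    conv_lhs => rw [pi_eq_sum_univ' c]
    simp only [map_sum, map_smul, u]
  let v : Fin m → inducedIdeal K × (Fin n → Aᵐᵒᵖ) := fun i =>
    (⟨((u i).1 : A₀), coe_mem_inducedIdeal (u i).1.2⟩, fun j => op ((unop ((u i).2 j) : A₀) : A))
  let f := Fintype.linearCombination Aᵐᵒᵖ v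
  -- `f` restricts to `φ⁻¹` on vectors with entries in `A₀`
  have hfφ : ∀ c : Fin m → A₀ᵐᵒᵖ, f (fun i => op ((unop (c i) : A₀) : A))
      = (⟨((φ.symm c).1 : A₀), coe_mem_inducedIdeal (φ.symm c).1.2⟩,
          fun j => op ((unop ((φ.symm c).2 j) : A₀) : A)) := by
    intro c
    rw [hu c]
    simp only [f, Fintype.linearCombination_apply, v]
    refine Prod.ext (Subtype.ext ?_) (funext fun j => unop_injective ?_)
    · simp [Prod.fst_sum]
    · simp [Prod.snd_sum, Finset.sum_apply]
  have hinj : Function.Injective f := by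
    rw [injective_iff_map_eq_zero]
    intro x hx
    let r : Option (Fin n) → Fin m → A₀ := fun l i =>
      l.elim ((u i).1 : A₀) fun j => unop ((u i).2 j)
    have hr : ∀ l ∈ Finset.univ, ∑ i, r l i • unop (x i) = 0 := by
      intro l _
      simp only [f, Fintype.linearCombination_apply, v] at hx
      cases l with
      | none =>
        have := congrArg (fun z => (z.1 : A)) hx
        simpa [Prod.fst_sum, r, Subring.smul_def] using this
      | some j =>
        have := congrArg (fun z => unop (z.2 j)) hx
        simpa [Prod.snd_sum, Finset.sum_apply, r, Subring.smul_def] using this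
    obtain ⟨p, a, y, hxy, ha⟩ := hf.system Finset.univ m r _ hr
    have ha0 : ∀ i k, a i k = 0 := by
      intro i k
      have h0 : φ.symm (fun i => op (a i k)) = 0 := by
        rw [hu]
        refine Prod.ext (Subtype.ext ?_) (funext fun j => unop_injective ?_)
        · simpa [Prod.fst_sum, r] using ha none (Finset.mem_univ _) k
        · simpa [Prod.snd_sum, Finset.sum_apply, r] using ha (some j) (Finset.mem_univ _) k
      exact op_injective (congrFun ((map_eq_zero_iff _ φ.symm.injective).1 h0) i)
    funext i
    exact unop_injective (by simp [hxy, ha0])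
  have hsurj : Function.Surjective f := by
    rw [← LinearMap.range_eq_top, eq_top_iff]
    -- the range contains both factors
    have h1 : ∀ z (hz : z ∈ inducedIdeal K), (⟨z, hz⟩, 0) ∈ LinearMap.range f := by
      intro z hz
      induction hz using Submodule.span_induction with
      | mem z hz =>
        obtain ⟨k, hk, rfl⟩ := hz
        refine ⟨_, (hfφ (φ (⟨k, hk⟩, 0))).trans ?_⟩
        simp
        rfl
      | zero => exact Submodule.zero_mem _
      | add z w _ _ hz hw => simpa using Submodule.add_mem _ hz hw
      | smul a z _ hz => simpa using Submodule.smul_mem _ a hz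
    have h2 : ∀ j, ((0 : inducedIdeal K), (Pi.single j 1 : Fin n → Aᵐᵒᵖ)) ∈
        LinearMap.range f := by
      intro j
      refine ⟨_, (hfφ (φ (0, Pi.single j 1))).trans ?_⟩
      refine Prod.ext (Subtype.ext ?_) (funext fun i => unop_injective ?_)
      · simp
      · by_cases h : i = j
        · subst h; simp
        · simp [h]
    rintro ⟨z, w⟩ -
    have hzw : (z, w) = ((z, 0) : inducedIdeal K × (Fin n → Aᵐᵒᵖ))
        + ∑ j, w j • ((0 : inducedIdeal K), (Pi.single j 1 : Fin n → Aᵐᵒᵖ)) := by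
      refine Prod.ext ?_ (funext fun i => ?_)
      · simp [Prod.fst_sum]
      · simp [Prod.snd_sum, Finset.sum_apply, Pi.single_apply]
    rw [hzw]
    exact Submodule.add_mem _ (h1 z z.2)
      (Submodule.sum_mem _ fun j _ => Submodule.smul_mem _ _ (h2 j))
  exact ⟨n, m, ⟨(LinearEquiv.ofBijective f ⟨hinj, hsurj⟩).symm⟩⟩

open DirectSum in
/-- When `0` is the only invertible degree, the components of nonzero degree form a two-sided
ideal, so that taking the degree-zero component is a ring retraction of `A` onto `A₀`. -/
theorem exists_retraction {G : Type*} [AddCommMonoid G] [DecidableEq G]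
    (hG : ∀ a b : G, a + b = 0 → a = 0) {A : Type*} [Ring A]
    (𝒜 : G → AddSubgroup A) [GradedRing 𝒜]
    (A₀ : Subring A) (hA₀ : (A₀ : Set A) = (𝒜 0 : Set A)) :
    ∃ π : A →+* A₀, ∀ c : A₀, π c = c := by
  have hmem : ∀ x, x ∈ A₀ ↔ x ∈ 𝒜 0 := fun x => Set.ext_iff.1 hA₀ x
  have hsame : ∀ x ∈ 𝒜 0, GradedRing.proj 𝒜 0 x = x := fun x hx =>
    decompose_of_mem_same 𝒜 hx
  have hne : ∀ i x, x ∈ 𝒜 i → i ≠ 0 → GradedRing.proj 𝒜 0 x = 0 := fun i x hx hi =>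
    decompose_of_mem_ne 𝒜 hx hi
  have hmul : ∀ x y, GradedRing.proj 𝒜 0 (x * y)
      = GradedRing.proj 𝒜 0 x * GradedRing.proj 𝒜 0 y := by
    intro x y
    induction x using Decomposition.inductionOn 𝒜 with
    | zero => simp
    | add x x' hx hx' => rw [add_mul, map_add, map_add, add_mul, hx, hx']
    | @homogeneous i x =>
      induction y using Decomposition.inductionOn 𝒜 with
      | zero => simp
      | add y y' hy hy' => rw [mul_add, map_add, map_add, mul_add, hy, hy']
      | @homogeneous j y =>
        have hxy : (x : A) * y ∈ 𝒜 (i + j) := SetLike.mul_mem_graded x.2 y.2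
        by_cases hi : i = 0
        · subst hi
          by_cases hj : j = 0
          · subst hj
            rw [hsame _ x.2, hsame _ y.2, hsame _ (by simpa using hxy)]
          · rw [hne j _ y.2 hj, mul_zero, hne _ _ hxy (by simpa using hj)]
        · rw [hne i _ x.2 hi, zero_mul, hne _ _ hxy fun h => hi (hG _ _ h)]
  refine ⟨{ toFun := fun x => ⟨GradedRing.proj 𝒜 0 x, (hmem _).2 (decompose 𝒜 x 0).2⟩
            map_one' := Subtype.ext (hsame 1 SetLike.GradedOne.one_mem)
            map_mul' := fun x y => Subtype.ext (hmul x y)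
            map_zero' := Subtype.ext (map_zero _)
            map_add' := fun x y => Subtype.ext (map_add _ x y) }, fun c => ?_⟩
  exact Subtype.ext (hsame _ ((hmem _).1 c.2))

open MulOpposite in
/-- If `A₀` is a retract of `A`, then a basis of `KA` retracts to a basis of `K`: the coordinates
of `k ∈ K` are the retractions of its coordinates in `KA`. -/
theorem free_of_free_inducedIdeal {A : Type*} [Ring A] {A₀ : Subring A}
    (π : A →+* A₀) (hπ : ∀ c : A₀, π c = c) {K : Submodule A₀ᵐᵒᵖ A₀}
    (hfree : Module.Free Aᵐᵒᵖ (inducedIdeal K)) : Module.Free A₀ᵐᵒᵖ K := by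
  let b := Module.Free.chooseBasis Aᵐᵒᵖ (inducedIdeal K)
  let ι : K → inducedIdeal K := fun k => ⟨(k : A₀), coe_mem_inducedIdeal k.2⟩
  -- the retraction maps `KA` onto `K`, and is compatible with the retracted coordinates
  have key : ∀ x (hx : x ∈ inducedIdeal K), ∃ hk : π x ∈ K, ∀ i,
      π (unop (b.repr ⟨x, hx⟩ i)) = π (unop (b.repr (ι ⟨π x, hk⟩) i)) := by
    intro x hx
    induction hx using Submodule.span_induction with
    | mem x hx =>
      obtain ⟨k, hk, rfl⟩ := hx
      refine ⟨by rwa [hπ], fun i => ?_⟩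
      simp only [ι, hπ]
    | zero =>
      refine ⟨by simp, fun i => ?_⟩
      simp only [ι, map_zero, ZeroMemClass.coe_zero]
    | add x y hx hy ihx ihy =>
      obtain ⟨hkx, ihx⟩ := ihx
      obtain ⟨hky, ihy⟩ := ihy
      refine ⟨by rw [map_add]; exact K.add_mem hkx hky, fun i => ?_⟩
      have e1 : (⟨x + y, Submodule.add_mem _ hx hy⟩ : inducedIdeal K) = ⟨x, hx⟩ + ⟨y, hy⟩ := rfl
      have e2 : ∀ h, ι ⟨π (x + y), h⟩ = ι ⟨π x, hkx⟩ + ι ⟨π y, hky⟩ := fun h =>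
        Subtype.ext (by simp [ι])
      rw [e1, e2]
      simp only [map_add, Finsupp.add_apply, unop_add, ihx, ihy]
    | smul a x hx ihx =>
      obtain ⟨hkx, ihx⟩ := ihx
      have e0 : π (a • x) = op (π (unop a)) • π x := by simp [MulOpposite.smul_eq_mul_unop]
      refine ⟨by rw [e0]; exact K.smul_mem _ hkx, fun i => ?_⟩
      have e1 : (⟨a • x, Submodule.smul_mem _ a hx⟩ : inducedIdeal K) = a • ⟨x, hx⟩ := rfl
      have e2 : ∀ h, ι ⟨π (a • x), h⟩ = op (π (unop a) : A) • ι ⟨π x, hkx⟩ := fun h =>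
        Subtype.ext (by simp [ι, MulOpposite.smul_eq_mul_unop])
      rw [e1, e2]
      rw [map_smul, map_smul]
      simp [ihx, hπ]
  let ψ : K →ₗ[A₀ᵐᵒᵖ] (Module.Free.ChooseBasisIndex Aᵐᵒᵖ (inducedIdeal K) →₀ A₀ᵐᵒᵖ) :=
    { toFun := fun k => (b.repr (ι k)).mapRange (fun a => op (π (unop a))) (by simp)
      map_add' := by
        intro k l
        have e : ι (k + l) = ι k + ι l := rfl
        ext i
        simp [e]
      map_smul' := by
        intro c k
        have e : ι (c • k) = op ((unop c : A₀) : A) • ι k := rfl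
        ext i
        simp [e, hπ] }
  have hinj : Function.Injective ψ := by
    rw [injective_iff_map_eq_zero]
    intro k hk
    have h0 : ∀ i, π (unop (b.repr (ι k) i)) = 0 := fun i =>
      op_injective (DFunLike.congr_fun hk i)
    have hsum := congrArg (fun z : inducedIdeal K => π (z : A)) (b.linearCombination_repr (ι k))
    simp only [Finsupp.linearCombination_apply, Finsupp.sum, Submodule.coe_sum, Submodule.coe_smul,
      map_sum, MulOpposite.smul_eq_mul_unop, map_mul, h0, mul_zero, Finset.sum_const_zero] at hsum
    refine Subtype.ext ?_
    rw [← hπ k]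
    exact hsum.symm
  have hsurj : Function.Surjective ψ := by
    intro c
    let x := b.repr.symm (c.mapRange (fun a => op ((unop a : A₀) : A)) (by simp))
    obtain ⟨hk, h⟩ := key x x.2
    refine ⟨⟨π x, hk⟩, Finsupp.ext fun i => unop_injective ?_⟩
    refine (h i).symm.trans ?_
    simp [x, hπ]
  exact Module.Free.of_equiv (LinearEquiv.ofBijective ψ ⟨hinj, hsurj⟩).symm

/-- Let `G` be an ordered-like additive semigroup and
`A = ⊕_{σ∈G} A_σ` a `G`-graded ring which is a domain with invariant basis number,
faithfully flat as a left module over its degree-zero subring `A₀`.  If `K` is a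
right ideal of `A₀` which is stably free but not free as a right `A₀`-module, then
the induced right ideal `KA` of `A` is stably free but not free as a right `A`-module. -/
theorem stablyFree_nonfree_lift_of_orderedLike_graded
    {G : Type*} [AddCommMonoid G] [DecidableEq G] (hG : OrderedLike G)
    {A : Type*} [Ring A] [IsDomain A] [InvariantBasisNumber A]
    (𝒜 : G → AddSubgroup A) [GradedRing 𝒜]
    (A₀ : Subring A) [InvariantBasisNumber A₀] (hA₀ : (A₀ : Set A) = (𝒜 0 : Set A))
    (hff : IsFaithfullyFlatLeft A₀ A)
    (K : Submodule A₀ᵐᵒᵖ A₀)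
    (hsf : IsStablyFree A₀ᵐᵒᵖ K) (hnf : ¬ Module.Free A₀ᵐᵒᵖ K) :
    IsStablyFree Aᵐᵒᵖ (Submodule.span Aᵐᵒᵖ (Subtype.val '' (K : Set A₀))) ∧
      ¬ Module.Free Aᵐᵒᵖ (Submodule.span Aᵐᵒᵖ (Subtype.val '' (K : Set A₀))) := by
  obtain ⟨π, hπ⟩ := exists_retraction hG.1 𝒜 A₀ hA₀
  exact ⟨isStablyFree_inducedIdeal hff.1 hsf, fun h => hnf (free_of_free_inducedIdeal π hπ h)⟩
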